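/- Let x_1, x_2, x_3 be points of the affine Grassmannian for SL_n over K = ℝ((t)) (lattices with val(det) = 0), and i+j+k = n with i,j,k ≥ 0. Then f^t_{ijk}(x_1,x_2,x_3) = min over points p of the affine Grassmannian of PGL_n of [ d_i(p,x_1) + d_j(p,x_2) + d_k(p,x_3) ], where d_a(p,x) = ω_a · d(p,x) and f^t_{ijk} is the tropical triple invariant. -/

import Mathlib

noncomputable section
open scoped Classical

variable {F : Type*} [Field F] {n : ℕ}

/-- `v` is a basis (over `F[[t]]`) of the full-rank lattice `L` in `K^n`, `K = F((t))`. -/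
def IsLatticeBasis (L : Submodule (PowerSeries F) (Fin n → LaurentSeries F))
    (v : Fin n → Fin n → LaurentSeries F) : Prop :=
  LinearIndependent (LaurentSeries F) v ∧ L = Submodule.span (PowerSeries F) (Set.range v)

/-- `L` is a full-rank `F[[t]]`-lattice in `K^n`. -/
def IsFullLattice (L : Submodule (PowerSeries F) (Fin n → LaurentSeries F)) : Prop :=
  ∃ v, IsLatticeBasis L v

/-- `t^λ` as an element of `K = F((t))`. -/
def tpow (lam : ℤ) : LaurentSeries F := HahnSeries.single lam 1

/-- `val (det L) = d` : the valuation of the determinant of an `O`-basis of `L` is `d`. -/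
def HasValDet (L : Submodule (PowerSeries F) (Fin n → LaurentSeries F)) (d : ℤ) : Prop :=
  ∃ v, IsLatticeBasis L v ∧ (Matrix.of v).det.order = d

/-- `w` is a generator of `L`: it belongs to some `O`-basis of `L`. -/
def IsGen (L : Submodule (PowerSeries F) (Fin n → LaurentSeries F))
    (w : Fin n → LaurentSeries F) : Prop :=
  ∃ v i, IsLatticeBasis L v ∧ v i = w

/-- `c(w, M) = lam`, i.e. `lam = min {μ : t^μ • w ∈ M}`. -/
def CVec (w : Fin n → LaurentSeries F) (M : Submodule (PowerSeries F) (Fin n → LaurentSeries F))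
    (lam : ℤ) : Prop :=
  IsLeast {μ : ℤ | (tpow μ : LaurentSeries F) • w ∈ M} lam

/-- `c(L, M) = c`, i.e. `c` is the minimum of `c(w,M)` over generators `w` of `L`. -/
def CLat (L M : Submodule (PowerSeries F) (Fin n → LaurentSeries F)) (c : ℤ) : Prop :=
  IsLeast {μ : ℤ | ∃ w, IsGen L w ∧ CVec w M μ} c

/-- `A(L_1, ..., L_n) = a` : the minimum of `val (det (v_1, ..., v_n))` over `v_i ∈ L_i`. -/
def AIs (Ls : Fin n → Submodule (PowerSeries F) (Fin n → LaurentSeries F)) (a : ℤ) : Prop :=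
  IsLeast {d : ℤ | ∃ v : Fin n → Fin n → LaurentSeries F,
    (∀ i, v i ∈ Ls i) ∧ (Matrix.of v).det ≠ 0 ∧ (Matrix.of v).det.order = d} a

/-- `x` lies in `t • L`. -/
def MemTL (L : Submodule (PowerSeries F) (Fin n → LaurentSeries F))
    (x : Fin n → LaurentSeries F) : Prop :=
  ∃ y ∈ L, x = (PowerSeries.X : PowerSeries F) • y

end
noncomputable section

/-- `d(L,M) = μ`, the coweight-valued distance: there is an `O`-basis `e_1, ..., e_n` of
`L` and a weakly decreasing sequence `μ_1 ≥ ... ≥ μ_n` (the elementary divisors of `M`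
relative to `L`) such that `t^{-μ_1} e_1, ..., t^{-μ_n} e_n` is an `O`-basis of `M`. -/
def IsDist {F : Type*} [Field F] {n : ℕ}
    (L M : Submodule (PowerSeries F) (Fin n → LaurentSeries F)) (μ : Fin n → ℤ) : Prop :=
  Antitone μ ∧ ∃ v, IsLatticeBasis L v ∧
    IsLatticeBasis M (fun i => (tpow (-(μ i)) : LaurentSeries F) • v i)

/-- `d_k(L,M)`: the sum of the first `k` (i.e. the `k` largest) entries of `d(L,M)`,
the pairing of `d(L,M)` with the fundamental weight `ω_k`. -/
def dPartial {n : ℕ} (k : ℕ) (μ : Fin n → ℤ) : ℤ :=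
  ∑ s ∈ Finset.univ.filter (fun s : Fin n => (s : ℕ) < k), μ s

end

noncomputable section
/-- `d_a(p,x)` normalized to the `PGL_n`/`SL_n` coweight plane: the pairing of the
fundamental weight `ω_a` with the distance `d(p,x)` translated into the plane
`∑ μ_s = 0`; it lies in `(1/n) ℤ`. -/
def dNorm {n : ℕ} (a : ℕ) (μ : Fin n → ℤ) : ℚ :=
  (dPartial a μ : ℚ) - ((a : ℚ) / (n : ℚ)) * ((∑ s, μ s : ℤ) : ℚ)
end

/-!
Write `c(p) = ∑ₐ d_{cₐ}(p, xₐ) - val (det p)` for a lattice `p`, where `cₐ` vectors of the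
determinant are taken from `xₐ`; up to a constant this is the normalized sum of distances. Expanding
a determinant multilinearly in bases of the `xₐ` adapted to `p` gives `-val (det v) ≤ c(p)`: this is
weak duality.

Let `p` minimize `c`, with residue space `p / t p ≅ Fⁿ`. If the images in it of the lattices
`p ∩ tᵐ xₐ`, with `m` running over the elementary divisors that enter `c(p)`, admit a linearly
independent transversal, then a lift of this transversal gives vectors `v` with
`-val (det v) = c(p)`. Otherwise, by Rado's theorem, some of these images span too small a subspace
`S ⊆ p / t p`, and replacing `p` by the preimage of `S` lowers `c`: `val (det p)` increases by the
codimension of `S`, which is more than the increase of the distances.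
-/

section Rado

open Finset Function Module

variable {ι K V : Type*} [DivisionRing K] [AddCommGroup V] [Module K V]

/-- Rado's condition on a family of subspaces: any `m` of them span a subspace of dimension at
least `m`. It characterizes the families with a linearly independent transversal. -/
def RadoCondition (A : ι → Submodule K V) : Prop :=
  ∀ I : Finset ι, #I ≤ finrank K ↥(I.sup A)

theorem exists_finrank_sup_le_card [DecidableEq ι] {A : ι → Submodule K V} (hA : RadoCondition A)
    {s : ι} {B : Submodule K V} (hB : ¬ RadoCondition (update A s B)) :
    ∃ I : Finset ι, s ∉ I ∧ finrank K ↥(B ⊔ I.sup A) ≤ #I := by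
  have sup_update {J : Finset ι} (hJ : s ∉ J) : J.sup (update A s B) = J.sup A :=
    sup_congr rfl fun t ht => update_of_ne (ne_of_mem_of_not_mem ht hJ) _ _
  simp only [RadoCondition, not_forall, not_le] at hB
  obtain ⟨I, hI⟩ := hB
  by_cases hs : s ∈ I
  · rw [← insert_erase hs, sup_insert, sup_update (notMem_erase s I), update_self,
      card_insert_of_notMem (notMem_erase s I)] at hI
    exact ⟨I.erase s, notMem_erase s I, Nat.lt_succ_iff.1 hI⟩
  · exact absurd (hA I) (not_le.2 (sup_update hs ▸ hI))

variable [FiniteDimensional K V]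

-- If both replacements failed, then submodularity of the dimension, applied to the two subspaces
-- `Bᵢ ⊔ Iᵢ.sup A` that witness this, would contradict the condition for `A`.
theorem RadoCondition.update_or_update [DecidableEq ι] {A : ι → Submodule K V}
    (hA : RadoCondition A) {s : ι} {B₁ B₂ : Submodule K V} (hB : B₁ ⊔ B₂ = A s) :
    RadoCondition (update A s B₁) ∨ RadoCondition (update A s B₂) := by
  by_contra! ⟨h₁, h₂⟩
  obtain ⟨I₁, hs₁, hI₁⟩ := exists_finrank_sup_le_card hA h₁
  obtain ⟨I₂, hs₂, hI₂⟩ := exists_finrank_sup_le_card hA h₂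
  have sup_eq : (B₁ ⊔ I₁.sup A) ⊔ (B₂ ⊔ I₂.sup A) = (insert s (I₁ ∪ I₂)).sup A := by
    rw [sup_sup_sup_comm, hB, sup_insert, sup_union]
  have le_inf : (I₁ ∩ I₂).sup A ≤ (B₁ ⊔ I₁.sup A) ⊓ (B₂ ⊔ I₂.sup A) :=
    _root_.le_inf ((sup_mono inter_subset_left).trans le_sup_right)
      ((sup_mono inter_subset_right).trans le_sup_right)
  have modular := Submodule.finrank_sup_add_finrank_inf_eq (B₁ ⊔ I₁.sup A) (B₂ ⊔ I₂.sup A)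
  have hunion := hA (insert s (I₁ ∪ I₂))
  rw [card_insert_of_notMem (by simp [hs₁, hs₂]), ← sup_eq] at hunion
  have hinter := (hA (I₁ ∩ I₂)).trans (Submodule.finrank_mono le_inf)
  have hcard := card_union_add_card_inter I₁ I₂
  omega

theorem exists_eq_span_singleton_of_minimal {A : ι → Submodule K V}
    (hA : Minimal RadoCondition A) (s : ι) : ∃ w, A s = K ∙ w := by
  classical
  have hne : A s ≠ ⊥ := by
    intro h
    simpa [h] using hA.prop {s}
  obtain ⟨w, hw, hw0⟩ := Submodule.exists_mem_ne_zero_of_ne_bot hne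
  have hwA : K ∙ w ≤ A s := (Submodule.span_singleton_le_iff_mem w _).2 hw
  obtain ⟨Q, hQ⟩ := Submodule.exists_isCompl (K ∙ w)
  have hsup : (K ∙ w) ⊔ Q ⊓ A s = A s := by
    rw [← sup_inf_assoc_of_le _ hwA, hQ.sup_eq_top, top_inf_eq]
  have eq_of_update {B : Submodule K V} (hB : B ≤ A s) (hR : RadoCondition (update A s B)) :
      A s = B := by
    have hle := hA.le_of_le hR (update_le_self_iff.2 hB) s
    rw [update_self] at hle
    exact hle.antisymm hB
  refine ⟨w, (hA.prop.update_or_update hsup).elim (eq_of_update hwA) fun hR => ?_⟩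
  have hwQ : w ∈ Q := by
    rw [eq_of_update inf_le_right hR] at hw
    exact hw.1
  exact absurd (hQ.disjoint.le_bot ⟨Submodule.mem_span_singleton_self w, hwQ⟩) hw0

theorem RadoCondition.exists_linearIndependent [Finite ι] {A : ι → Submodule K V}
    (hA : RadoCondition A) : ∃ w : ι → V, (∀ s, w s ∈ A s) ∧ LinearIndependent K w := by
  have := Fintype.ofFinite ι
  obtain ⟨A', hle, hmin⟩ := exists_minimal_le_of_wellFoundedLT RadoCondition A hA
  choose w hw using exists_eq_span_singleton_of_minimal hmin
  refine ⟨w, fun s => hle s (hw s ▸ Submodule.mem_span_singleton_self (w s)), ?_⟩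
  have hspan : univ.sup A' = Submodule.span K (Set.range w) := by
    rw [Submodule.span_range_eq_iSup, sup_univ_eq_iSup]
    exact iSup_congr hw
  rw [linearIndependent_iff_card_le_finrank_span, Set.finrank, ← hspan]
  exact hmin.prop univ

end Rado

section TotalDist

open Finset

variable {n : ℕ} {ι : Type*}

theorem sum_le_dPartial_card {ν : Fin n → ℤ} (hν : Antitone ν) (T : Finset (Fin n)) :
    ∑ s ∈ T, ν s ≤ dPartial #T ν := by
  set A : Finset (Fin n) := {s | (s : ℕ) < #T} with hA
  have hcard : #(T \ A) = #(A \ T) := by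
    refine card_sdiff_comm ?_
    rw [hA, Fin.card_filter_val_lt, min_eq_right (card_finset_fin_le T)]
  let e := equivOfCardEq hcard
  refine sum_sdiff_le_sum_sdiff.1 ?_
  rw [← sum_coe_sort (T \ A), ← sum_coe_sort (A \ T), ← e.sum_comp]
  refine sum_le_sum fun s _ => hν ?_
  have hs : #T ≤ (s : Fin n) := by simpa [A] using (mem_sdiff.1 s.2).2
  have hes : ((e s : Fin n) : ℕ) < #T := by simpa [A] using (mem_sdiff.1 (e s).2).1
  exact (hes.trans_le hs).le

variable [Fintype ι] [DecidableEq ι]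

/-- The pairing `∑ₐ ω_{cₐ} · νₐ` of a family of coweights with fundamental weights, where `cₐ` is
the number of indices `s` with `lab s = a`. Here `lab s` tells from which lattice of a family the
`s`-th vector of a determinant is taken. -/
def totalDist (lab : Fin n → ι) (ν : ι → Fin n → ℤ) : ℤ :=
  ∑ a, dPartial #{s | lab s = a} (ν a)

theorem exists_forall_sum_eq_totalDist (lab : Fin n → ι) :
    ∃ pos : Fin n → Fin n, ∀ ν : ι → Fin n → ℤ, ∑ s, ν (lab s) (pos s) = totalDist lab ν := by
  have e (a : ι) : {s // lab s = a} ≃ {r : Fin n // (r : ℕ) < #{s | lab s = a}} :=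
    Fintype.equivOfCardEq <| by
      rw [Fintype.card_subtype, Fintype.card_subtype, Fin.card_filter_val_lt,
        min_eq_right (card_finset_fin_le _)]
  refine ⟨fun s => e (lab s) ⟨s, rfl⟩, fun ν => ?_⟩
  rw [← Fintype.sum_fiberwise lab]
  refine sum_congr rfl fun a _ => ?_
  rw [dPartial, ← sum_subtype_eq_sum_filter, subtype_univ, ← (e a).sum_comp]
  exact sum_congr rfl fun ⟨s, hs⟩ _ => by subst hs; rfl

theorem sum_le_totalDist {lab : Fin n → ι} {ν : ι → Fin n → ℤ} (hν : ∀ a, Antitone (ν a))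
    {r : Fin n → Fin n} (hr : ∀ s s', lab s = lab s' → r s = r s' → s = s') :
    ∑ s, ν (lab s) (r s) ≤ totalDist lab ν := by
  rw [← sum_fiberwise univ lab]
  refine sum_le_sum fun a _ => ?_
  have hinj : Set.InjOn r (({s | lab s = a} : Finset (Fin n)) : Set (Fin n)) := by
    intro s hs s' hs'
    simp only [coe_filter, mem_univ, true_and, Set.mem_ofPred_eq] at hs hs'
    exact hr s s' (hs.trans hs'.symm)
  calc ∑ s with lab s = a, ν (lab s) (r s)
      = ∑ s with lab s = a, ν a (r s) :=
        sum_congr rfl fun s hs => by rw [(mem_filter.1 hs).2]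
    _ = ∑ t ∈ image r {s | lab s = a}, ν a t := (sum_image hinj).symm
    _ ≤ dPartial #{s | lab s = a} (ν a) := by
        simpa only [card_image_of_injOn hinj] using
          sum_le_dPartial_card (hν a) (image r {s | lab s = a})

end TotalDist

section LaurentPowers

open scoped PowerSeries LaurentSeries

variable {F : Type*} [Field F]

theorem tpow_zero : (tpow 0 : F⸨X⸩) = 1 := rfl

theorem tpow_add (a b : ℤ) : (tpow (a + b) : F⸨X⸩) = tpow a * tpow b := by
  simp only [tpow, HahnSeries.single_mul_single, mul_one]

theorem tpow_ne_zero (a : ℤ) : (tpow a : F⸨X⸩) ≠ 0 := by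
  simp only [tpow, ne_eq, HahnSeries.single_eq_zero_iff, one_ne_zero, not_false_eq_true]

theorem order_tpow (a : ℤ) : (tpow a : F⸨X⸩).order = a :=
  HahnSeries.order_single one_ne_zero

theorem prod_tpow {ι : Type*} (T : Finset ι) (e : ι → ℤ) :
    ∏ s ∈ T, (tpow (e s) : F⸨X⸩) = tpow (∑ s ∈ T, e s) := by
  classical
  induction T using Finset.induction_on with
  | empty => rfl
  | insert a T ha ih => rw [Finset.prod_insert ha, Finset.sum_insert ha, ih, tpow_add]

theorem tpow_natCast (m : ℕ) :
    (tpow m : F⸨X⸩) = algebraMap F⟦X⟧ F⸨X⸩ (PowerSeries.X ^ m) := by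
  rw [LaurentSeries.coe_algebraMap, HahnSeries.ofPowerSeries_X_pow, tpow]

theorem order_algebraMap_nonneg (f : F⟦X⟧) : 0 ≤ (algebraMap F⟦X⟧ F⸨X⸩ f).order := by
  by_cases h : algebraMap F⟦X⟧ F⸨X⸩ f = 0
  · rw [h, HahnSeries.order_zero]
  · refine (HahnSeries.le_order_iff_forall h).2 fun m hm => ?_
    rw [LaurentSeries.coe_algebraMap, PowerSeries.coeff_coe, if_pos hm]

theorem order_algebraMap_of_isUnit {f : F⟦X⟧} (hf : IsUnit f) :
    (algebraMap F⟦X⟧ F⸨X⸩ f).order = 0 := by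
  obtain ⟨g, hg⟩ := hf.exists_right_inv
  have hmul : algebraMap F⟦X⟧ F⸨X⸩ f * algebraMap F⟦X⟧ F⸨X⸩ g = 1 := by
    rw [← map_mul, hg, map_one]
  have horder := HahnSeries.order_mul (left_ne_zero_of_mul_eq_one hmul)
    (right_ne_zero_of_mul_eq_one hmul)
  rw [hmul, HahnSeries.order_one] at horder
  have := order_algebraMap_nonneg f
  have := order_algebraMap_nonneg g
  omega

variable {M : Type*} [AddCommGroup M] [Module F⸨X⸩ M]

theorem tpow_smul_tpow_smul (a b : ℤ) (w : M) :
    (tpow a : F⸨X⸩) • (tpow b : F⸨X⸩) • w = (tpow (a + b) : F⸨X⸩) • w := by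
  rw [smul_smul, tpow_add]

variable [Module F⟦X⟧ M] [IsScalarTower F⟦X⟧ F⸨X⸩ M]

theorem tpow_natCast_smul (m : ℕ) (w : M) :
    (tpow m : F⸨X⸩) • w = (PowerSeries.X ^ m : F⟦X⟧) • w := by
  rw [tpow_natCast, algebraMap_smul]

end LaurentPowers

section Determinants

open scoped PowerSeries LaurentSeries
open Submodule

theorem det_linearCombination {m R A : Type*} [Fintype m] [DecidableEq m] [CommRing R]
    [CommRing A] [Algebra R A] (P : m → m → A) (C : m → m → R) :
    (Matrix.of fun s => Fintype.linearCombination R P (C s)).det =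
      algebraMap R A (Matrix.of C).det * (Matrix.of P).det := by
  have hmul : (Matrix.of fun s => Fintype.linearCombination R P (C s)) =
      (Matrix.of C).map (algebraMap R A) * Matrix.of P := by
    ext s t
    simp only [Matrix.of_apply, Fintype.linearCombination_apply, Finset.sum_apply, Pi.smul_apply,
      Matrix.mul_apply, Matrix.map_apply]
    simp only [Algebra.smul_def]
  rw [hmul, Matrix.det_mul, RingHom.map_det, RingHom.mapMatrix_apply]

variable {F : Type*} [Field F] {n : ℕ}

theorem linearIndependent_iff_det_ne_zero {v : Fin n → Fin n → F} :
    LinearIndependent F v ↔ (Matrix.of v).det ≠ 0 := by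
  rw [← isUnit_iff_ne_zero, ← Matrix.isUnit_iff_isUnit_det]
  exact Matrix.linearIndependent_rows_iff_isUnit (A := Matrix.of v)

theorem det_tpow_smul (e : Fin n → ℤ) (P : Fin n → Fin n → F⸨X⸩) :
    (Matrix.of fun s => (tpow (e s) : F⸨X⸩) • P s).det =
      tpow (∑ s, e s) * (Matrix.of P).det := by
  rw [← prod_tpow]
  exact Matrix.det_mul_column (fun s => tpow (e s)) (Matrix.of P)

theorem order_det_tpow_smul (e : Fin n → ℤ) {P : Fin n → Fin n → F⸨X⸩}
    (hP : (Matrix.of P).det ≠ 0) :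
    (Matrix.of fun s => (tpow (e s) : F⸨X⸩) • P s).det.order =
      ∑ s, e s + (Matrix.of P).det.order := by
  rw [det_tpow_smul, HahnSeries.order_mul (tpow_ne_zero _) hP, order_tpow]

theorem linearIndependent_tpow_smul (e : Fin n → ℤ) {P : Fin n → Fin n → F⸨X⸩}
    (hP : LinearIndependent F⸨X⸩ P) :
    LinearIndependent F⸨X⸩ fun s => (tpow (e s) : F⸨X⸩) • P s := by
  rw [linearIndependent_iff_det_ne_zero] at hP ⊢
  rw [det_tpow_smul]
  exact mul_ne_zero (tpow_ne_zero _) hP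

theorem mem_span_range_iff_exists_linearCombination {P : Fin n → Fin n → F⸨X⸩}
    {w : Fin n → F⸨X⸩} :
    w ∈ span F⟦X⟧ (Set.range P) ↔ ∃ c, Fintype.linearCombination F⟦X⟧ P c = w := by
  rw [← Fintype.range_linearCombination, LinearMap.mem_range]

theorem order_det_le_of_mem_span {P v : Fin n → Fin n → F⸨X⸩}
    (h : ∀ s, v s ∈ span F⟦X⟧ (Set.range P)) (hv : (Matrix.of v).det ≠ 0) :
    (Matrix.of P).det.order ≤ (Matrix.of v).det.order := by
  choose C hC using fun s => mem_span_range_iff_exists_linearCombination.1 (h s)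
  obtain rfl := funext hC
  rw [det_linearCombination] at hv ⊢
  rw [HahnSeries.order_mul (left_ne_zero_of_mul hv) (right_ne_zero_of_mul hv)]
  exact le_add_of_nonneg_left (order_algebraMap_nonneg _)

theorem IsLatticeBasis.mem {L : Submodule F⟦X⟧ (Fin n → F⸨X⸩)} {v : Fin n → Fin n → F⸨X⸩}
    (hv : IsLatticeBasis L v) (s : Fin n) : v s ∈ L := by
  rw [hv.2]
  exact subset_span ⟨s, rfl⟩

theorem HasValDet.order_det_eq {L : Submodule F⟦X⟧ (Fin n → F⸨X⸩)} {d : ℤ} (hL : HasValDet L d)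
    {v : Fin n → Fin n → F⸨X⸩} (hv : IsLatticeBasis L v) : (Matrix.of v).det.order = d := by
  obtain ⟨P, hP, rfl⟩ := hL
  refine le_antisymm (order_det_le_of_mem_span (fun s => ?_) ?_)
    (order_det_le_of_mem_span (fun s => ?_) ?_)
  · exact hv.2 ▸ hP.mem s
  · exact linearIndependent_iff_det_ne_zero.1 hP.1
  · exact hP.2 ▸ hv.mem s
  · exact linearIndependent_iff_det_ne_zero.1 hv.1

end Determinants

section WeakDuality

open scoped PowerSeries LaurentSeries
open Submodule Finset

variable {F : Type*} [Field F] {n : ℕ} {ι : Type*}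

theorem exists_order_det_le [Finite ι] {G : Fin n → ι → Fin n → F⸨X⸩}
    {v : Fin n → Fin n → F⸨X⸩} (hv : ∀ s, v s ∈ span F⟦X⟧ (Set.range (G s)))
    (hdet : (Matrix.of v).det ≠ 0) :
    ∃ r : Fin n → ι, (Matrix.of fun s => G s (r s)).det ≠ 0 ∧
      (Matrix.of fun s => G s (r s)).det.order ≤ (Matrix.of v).det.order := by
  classical
  have := Fintype.ofFinite ι
  choose c hc using fun s => (mem_span_range_iff_exists_fun F⟦X⟧).1 (hv s)
  have hexpand : (Matrix.of v).det = ∑ r : Fin n → ι,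
      algebraMap F⟦X⟧ F⸨X⸩ (∏ s, c s (r s)) * (Matrix.of fun s => G s (r s)).det := by
    obtain rfl : (fun s => ∑ r, c s r • G s r) = v := funext hc
    simp only [← Algebra.smul_def]
    refine ((Matrix.detRowAlternating (R := F⸨X⸩) (n := Fin n)).toMultilinearMap.restrictScalars
      F⟦X⟧).map_sum (fun s r => c s r • G s r) |>.trans <| sum_congr rfl fun r _ => ?_
    exact MultilinearMap.map_smul_univ _ _ _
  have hcoeff : (Matrix.of v).det.coeff (Matrix.of v).det.order ≠ 0 :=
    mt HahnSeries.coeff_order_eq_zero.1 hdet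
  set m := (Matrix.of v).det.order
  rw [hexpand, HahnSeries.coeff_sum] at hcoeff
  obtain ⟨r, -, hr⟩ := exists_ne_zero_of_sum_ne_zero hcoeff
  have hne := HahnSeries.ne_zero_of_coeff_ne_zero hr
  have hle := HahnSeries.order_le_of_coeff_ne_zero hr
  rw [HahnSeries.order_mul (left_ne_zero_of_mul hne) (right_ne_zero_of_mul hne)] at hle
  exact ⟨r, right_ne_zero_of_mul hne,
    (le_add_of_nonneg_left (order_algebraMap_nonneg _)).trans hle⟩

variable [Fintype ι] [DecidableEq ι]

theorem order_det_sub_totalDist_le {lab : Fin n → ι} {P v : Fin n → Fin n → F⸨X⸩}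
    {ν : ι → Fin n → ℤ} (hν : ∀ a, Antitone (ν a)) {g : ι → Fin n → Fin n → F⸨X⸩}
    (hg : ∀ a s, (tpow (ν a s) : F⸨X⸩) • g a s ∈ span F⟦X⟧ (Set.range P))
    (hv : ∀ s, v s ∈ span F⟦X⟧ (Set.range (g (lab s)))) (hdet : (Matrix.of v).det ≠ 0) :
    (Matrix.of P).det.order - totalDist lab ν ≤ (Matrix.of v).det.order := by
  obtain ⟨r, hr0, hr⟩ := exists_order_det_le hv hdet
  have hinj (s s') (hlab : lab s = lab s') (hrs : r s = r s') : s = s' := by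
    by_contra hne
    exact hr0 (Matrix.det_zero_of_row_eq hne (congrArg₂ g hlab hrs))
  have hP : (Matrix.of P).det.order ≤
      (Matrix.of fun s => (tpow (ν (lab s) (r s)) : F⸨X⸩) • g (lab s) (r s)).det.order :=
    order_det_le_of_mem_span (fun s => hg _ _) <| by
      rw [det_tpow_smul fun s => ν (lab s) (r s)]
      exact mul_ne_zero (tpow_ne_zero _) hr0
  rw [order_det_tpow_smul (fun s => ν (lab s) (r s)) hr0] at hP
  linarith [sum_le_totalDist hν hinj]

theorem neg_order_det_le_totalDist {lab : Fin n → ι}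
    {p : Submodule F⟦X⟧ (Fin n → F⸨X⸩)} {x : ι → Submodule F⟦X⟧ (Fin n → F⸨X⸩)} {D : ℤ}
    {μ : ι → Fin n → ℤ} (hp : HasValDet p D) (hμ : ∀ a, IsDist p (x a) (μ a))
    {v : Fin n → Fin n → F⸨X⸩} (hv : ∀ s, v s ∈ x (lab s)) (hdet : (Matrix.of v).det ≠ 0) :
    -(Matrix.of v).det.order ≤ totalDist lab μ - D := by
  obtain ⟨P, hP, rfl⟩ := hp
  choose hanti e he hx using hμ
  have := order_det_sub_totalDist_le (lab := lab) (P := P) hanti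
    (g := fun a s => (tpow (-(μ a s)) : F⸨X⸩) • e a s)
    (fun a s => by
      rw [tpow_smul_tpow_smul, add_neg_cancel, tpow_zero, one_smul, ← hP.2]
      exact (he a).mem s)
    (fun s => (hx (lab s)).2 ▸ hv s) hdet
  linarith

end WeakDuality

section Residues

open scoped PowerSeries LaurentSeries
open Submodule PowerSeries Module

variable {F : Type*} [Field F] {n : ℕ}

theorem order_det_linearCombination_of_residue {P : Fin n → Fin n → F⸨X⸩}
    (hP : (Matrix.of P).det ≠ 0) {d : Fin n → Fin n → F⟦X⟧}
    (hd : LinearIndependent F fun s r => constantCoeff (d s r)) :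
    (Matrix.of fun s => Fintype.linearCombination F⟦X⟧ P (d s)).det ≠ 0 ∧
      (Matrix.of fun s => Fintype.linearCombination F⟦X⟧ P (d s)).det.order =
        (Matrix.of P).det.order := by
  have hunit : IsUnit (Matrix.of d).det := by
    rw [isUnit_iff_constantCoeff, RingHom.map_det, isUnit_iff_ne_zero]
    exact linearIndependent_iff_det_ne_zero.1 hd
  have hne : algebraMap F⟦X⟧ F⸨X⸩ (Matrix.of d).det ≠ 0 :=
    (hunit.map (algebraMap F⟦X⟧ F⸨X⸩)).ne_zero
  rw [det_linearCombination, HahnSeries.order_mul hne hP, order_algebraMap_of_isUnit hunit,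
    zero_add]
  exact ⟨mul_ne_zero hne hP, rfl⟩

/-- The image in `p / t p ≅ Fⁿ` of `p ∩ tᵐ x`, where `p` is the lattice with basis `P`. -/
def residueFiltration (P : Fin n → Fin n → F⸨X⸩) (x : Submodule F⟦X⟧ (Fin n → F⸨X⸩)) (m : ℤ) :
    Submodule F (Fin n → F) where
  carrier := {w | ∃ d : Fin n → F⟦X⟧, (fun r => constantCoeff (d r)) = w ∧
    (tpow (-m) : F⸨X⸩) • Fintype.linearCombination F⟦X⟧ P d ∈ x}
  zero_mem' := ⟨0, by simp only [Pi.zero_apply, map_zero]; rfl,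
    by rw [map_zero, smul_zero]; exact x.zero_mem⟩
  add_mem' := by
    rintro _ _ ⟨d, rfl, hd⟩ ⟨d', rfl, hd'⟩
    refine ⟨d + d', by simp only [Pi.add_apply, map_add]; rfl, ?_⟩
    simpa only [map_add, smul_add] using x.add_mem hd hd'
  smul_mem' := by
    rintro a _ ⟨d, rfl, hd⟩
    refine ⟨C a • d, by simp only [Pi.smul_apply, smul_eq_mul, map_mul, constantCoeff_C]; rfl, ?_⟩
    rw [map_smul, smul_comm]
    exact x.smul_mem _ hd

theorem exists_order_det_eq_of_linearIndependent {P : Fin n → Fin n → F⸨X⸩}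
    (hP : (Matrix.of P).det ≠ 0) {x : Fin n → Submodule F⟦X⟧ (Fin n → F⸨X⸩)} {e : Fin n → ℤ}
    {w : Fin n → Fin n → F} (hw : ∀ s, w s ∈ residueFiltration P (x s) (e s))
    (hli : LinearIndependent F w) :
    ∃ v : Fin n → Fin n → F⸨X⸩, (∀ s, v s ∈ x s) ∧ (Matrix.of v).det ≠ 0 ∧
      (Matrix.of v).det.order = (Matrix.of P).det.order - ∑ s, e s := by
  choose d hd hdx using hw
  obtain rfl : (fun s r => constantCoeff (d s r)) = w := funext hd
  obtain ⟨hne, horder⟩ := order_det_linearCombination_of_residue hP hli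
  refine ⟨_, hdx, ?_, ?_⟩
  · rw [det_tpow_smul fun s => -(e s)]
    exact mul_ne_zero (tpow_ne_zero _) hne
  · rw [order_det_tpow_smul (fun s => -(e s)) hne, horder, Finset.sum_neg_distrib]
    ring

theorem exists_sum_smul_C_eq (b : Basis (Fin n) F (Fin n → F)) (c : Fin n → F⟦X⟧) :
    ∃ y : Fin n → F⟦X⟧, (∀ r, constantCoeff (y r) = b.coord r fun s => constantCoeff (c s)) ∧
      ∑ r, y r • (fun s => C (b r s)) = c := by
  refine ⟨fun r => mk fun m => b.coord r fun s => coeff m (c s), fun r => ?_, ?_⟩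
  · simp only [← coeff_zero_eq_constantCoeff_apply, coeff_mk]
  · ext s m
    have hm := congrFun (b.sum_repr fun s => coeff m (c s)) s
    simpa only [Finset.sum_apply, Pi.smul_apply, smul_eq_mul, map_sum, coeff_mul_C, coeff_mk,
      Basis.coord_apply] using hm

theorem sum_ite_mem_zero_one (T : Finset (Fin n)) :
    (∑ r, if r ∈ T then 0 else 1 : ℤ) = n - T.card := by
  rw [Finset.sum_ite, Finset.sum_const_zero, zero_add, Finset.sum_const, nsmul_one,
    Finset.filter_notMem_eq_sdiff, ← Finset.compl_eq_univ_sdiff, Finset.card_compl,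
    Fintype.card_fin, Nat.cast_sub (card_finset_fin_le T)]

-- `P'` spans the preimage of `S` under the projection of the lattice spanned by `P` to `Fⁿ`.
theorem exists_basis_residue_preimage {P : Fin n → Fin n → F⸨X⸩} (hP : (Matrix.of P).det ≠ 0)
    (S : Submodule F (Fin n → F)) :
    ∃ P' : Fin n → Fin n → F⸨X⸩, (Matrix.of P').det ≠ 0 ∧
      (Matrix.of P').det.order = (Matrix.of P).det.order + (n - finrank F S) ∧
      ∀ c : Fin n → F⟦X⟧, (fun r => constantCoeff (c r)) ∈ S →
        Fintype.linearCombination F⟦X⟧ P c ∈ span F⟦X⟧ (Set.range P') := by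
  classical
  obtain ⟨k, snf⟩ := smithNormalForm (Pi.basisFun F (Fin n)) S
  have hk : finrank F S = k := by rw [finrank_eq_card_basis snf.bN, Fintype.card_fin]
  let Q (r : Fin n) := Fintype.linearCombination F⟦X⟧ P fun s => C (snf.bM r s)
  let T : Finset (Fin n) := Finset.univ.map snf.f
  let e (r : Fin n) : ℤ := if r ∈ T then 0 else 1
  obtain ⟨hQ, hQorder⟩ := order_det_linearCombination_of_residue hP
    (d := fun r s => C (snf.bM r s))
    (by simpa only [constantCoeff_C] using snf.bM.linearIndependent)
  have hsum : ∑ r, e r = n - k := by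
    rw [sum_ite_mem_zero_one, Finset.card_map, Finset.card_univ, Fintype.card_fin]
  refine ⟨fun r => (tpow (e r) : F⸨X⸩) • Q r, ?_, ?_, fun c hc => ?_⟩
  · rw [det_tpow_smul]
    exact mul_ne_zero (tpow_ne_zero _) hQ
  · rw [order_det_tpow_smul e hQ, hQorder, hsum, hk, add_comm]
  obtain ⟨y, hy, hyc⟩ := exists_sum_smul_C_eq snf.bM c
  rw [← hyc, map_sum]
  refine sum_mem fun r _ => ?_
  rw [map_smul]
  have hr : (tpow (e r) : F⸨X⸩) • Q r ∈ span F⟦X⟧ (Set.range fun r => (tpow (e r) : F⸨X⸩) • Q r) :=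
    subset_span ⟨r, rfl⟩
  by_cases hrT : r ∈ T
  · simp only [e, if_pos hrT, tpow_zero, one_smul] at hr
    exact smul_mem _ _ hr
  · have hrange : r ∉ Set.range snf.f := by simpa [T] using hrT
    obtain ⟨z, hz⟩ := X_dvd_iff.2 ((hy r).trans (snf.le_ker_coord_of_notMem_range hrange hc))
    have hX : (tpow (e r) : F⸨X⸩) • Q r = (X : F⟦X⟧) • Q r := by
      simpa only [e, if_neg hrT, Nat.cast_one, pow_one] using
        tpow_natCast_smul (F := F) 1 (Q r)
    rw [hz, mul_comm, mul_smul, ← hX]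
    exact smul_mem _ _ hr

end Residues

section ElementaryDivisors

open scoped PowerSeries LaurentSeries Pointwise
open Submodule Module

variable {F : Type*} [Field F] {n : ℕ} {p x : Submodule F⟦X⟧ (Fin n → F⸨X⸩)}

theorem isLatticeBasis_of_basis (b : Basis (Fin n) F⟦X⟧ p) :
    IsLatticeBasis p fun s => (b s : Fin n → F⸨X⸩) := by
  refine ⟨(LinearIndependent.iff_fractionRing F⟦X⟧ F⸨X⸩).1
    (b.linearIndependent.map' p.subtype p.ker_subtype), ?_⟩
  rw [Set.range_comp' Subtype.val b]
  exact (map_subtype_top p).symm.trans (b.span_eq ▸ map_span p.subtype _)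

theorem IsFullLattice.nonempty_basis (hp : IsFullLattice p) : Nonempty (Basis (Fin n) F⟦X⟧ p) := by
  obtain ⟨P, hP, rfl⟩ := hp
  exact ⟨Basis.span ((LinearIndependent.iff_fractionRing F⟦X⟧ F⸨X⸩).2 hP)⟩

theorem IsLatticeBasis.comp_perm {v : Fin n → Fin n → F⸨X⸩} (hv : IsLatticeBasis p v)
    (σ : Equiv.Perm (Fin n)) : IsLatticeBasis p (v ∘ σ) :=
  ⟨hv.1.comp σ σ.injective, by rw [σ.surjective.range_comp, hv.2]⟩

theorem IsLatticeBasis.tpow_smul {v : Fin n → Fin n → F⸨X⸩} (hv : IsLatticeBasis p v) (m : ℤ) :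
    IsLatticeBasis ((tpow m : F⸨X⸩) • p) fun s => (tpow m : F⸨X⸩) • v s := by
  refine ⟨linearIndependent_tpow_smul (fun _ => m) hv.1, ?_⟩
  rw [hv.2, smul_span, ← Set.range_smul]

theorem IsFullLattice.exists_tpow_smul_mem (hp : IsFullLattice p) {κ : Type*} [Finite κ]
    (w : κ → Fin n → F⸨X⸩) : ∃ N : ℕ, ∀ i, (tpow N : F⸨X⸩) • w i ∈ p := by
  obtain ⟨P, hP, rfl⟩ := hp
  have htop := hP.span_eq_top_of_card_eq_finrank' (by simp)
  choose a ha using fun i => (mem_span_range_iff_exists_fun F⸨X⸩).1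
    (htop ▸ mem_top : w i ∈ span F⸨X⸩ (Set.range P))
  obtain ⟨⟨_, N, rfl⟩, hN⟩ := IsLocalization.exist_integer_multiples_of_finite
    (Submonoid.powers (PowerSeries.X : F⟦X⟧)) fun q : κ × Fin n => a q.1 q.2
  refine ⟨N, fun i => ?_⟩
  rw [tpow_natCast_smul, ← ha i, Finset.smul_sum]
  refine sum_mem fun r _ => ?_
  obtain ⟨f, hf⟩ := hN (i, r)
  rw [← smul_assoc]
  change algebraMap F⟦X⟧ F⸨X⸩ f = (PowerSeries.X ^ N : F⟦X⟧) • a i r at hf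
  rw [← hf, algebraMap_smul]
  exact smul_mem _ _ (subset_span ⟨r, rfl⟩)

theorem IsFullLattice.exists_tpow_smul_le (hp : IsFullLattice p) (hx : IsFullLattice x) :
    ∃ N : ℕ, (tpow N : F⸨X⸩) • x ≤ p := by
  obtain ⟨G, hG⟩ := hx
  obtain ⟨N, hN⟩ := hp.exists_tpow_smul_mem G
  refine ⟨N, ?_⟩
  rw [(hG.tpow_smul N).2, span_le]
  rintro _ ⟨s, rfl⟩
  exact hN s

theorem exists_isLatticeBasis_tpow_natCast_smul (hp : IsFullLattice p) (hx : IsFullLattice x)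
    (hxp : x ≤ p) : ∃ (e : Fin n → Fin n → F⸨X⸩) (m : Fin n → ℕ), IsLatticeBasis p e ∧
      IsLatticeBasis x fun s => (tpow (m s) : F⸨X⸩) • e s := by
  obtain ⟨bp⟩ := hp.nonempty_basis
  obtain ⟨bx⟩ := hx.nonempty_basis
  have hrank : finrank F⟦X⟧ (x.submoduleOf p) = finrank F⟦X⟧ p := by
    rw [(submoduleOfEquivOfLe hxp).finrank_eq, finrank_eq_card_basis bx, finrank_eq_card_basis bp]
  obtain ⟨b, a, ab, hab⟩ := exists_smith_normal_form_of_rank_eq bp hrank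
  have ha (s) : a s ≠ 0 := by
    intro h
    refine ab.ne_zero s (Subtype.ext ?_)
    rw [hab, h, zero_smul]
    rfl
  choose m u hmu using fun s =>
    IsDiscreteValuationRing.eq_unit_mul_pow_irreducible (ha s) PowerSeries.X_irreducible
  refine ⟨_, m, isLatticeBasis_of_basis (b.unitsSMul u), ?_⟩
  convert isLatticeBasis_of_basis (ab.map (submoduleOfEquivOfLe hxp)) using 2 with s
  have hs : (ab s : p) = (PowerSeries.X ^ m s : F⟦X⟧) • b.unitsSMul u s := by
    rw [hab, hmu, mul_comm, mul_smul, Basis.unitsSMul_apply]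
    rfl
  rw [tpow_natCast_smul]
  exact (congrArg Subtype.val hs).symm

theorem exists_isDist (hp : IsFullLattice p) (hx : IsFullLattice x) : ∃ μ, IsDist p x μ := by
  obtain ⟨N, hN⟩ := hp.exists_tpow_smul_le hx
  obtain ⟨G, hG⟩ := hx
  obtain ⟨e, m, he, hxe⟩ := exists_isLatticeBasis_tpow_natCast_smul hp ⟨_, hG.tpow_smul N⟩ hN
  let σ := Tuple.sort m
  refine ⟨fun s => N - m (σ s), fun s s' hss => ?_, e ∘ σ, he.comp_perm σ, ?_⟩
  · exact sub_le_sub_left (Nat.cast_le.2 (Tuple.monotone_sort m hss)) _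
  · convert (hxe.tpow_smul (-N)).comp_perm σ using 1
    · rw [smul_smul, ← tpow_add, neg_add_cancel, tpow_zero, one_smul]
    · funext s
      simp only [Function.comp_apply, tpow_smul_tpow_smul, neg_sub, neg_add_eq_sub]

end ElementaryDivisors

section Descent

open scoped PowerSeries LaurentSeries
open Submodule PowerSeries Module Finset

variable {F : Type*} [Field F] {n : ℕ}

theorem IsDist.dPartial_le {p x : Submodule F⟦X⟧ (Fin n → F⸨X⸩)} {μ ν : Fin n → ℤ}
    (hμ : IsDist p x μ) {g : Fin n → Fin n → F⸨X⸩} (hg : IsLatticeBasis x g) (hν : Antitone ν)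
    (hgp : ∀ s, (tpow (ν s) : F⸨X⸩) • g s ∈ p) {i : ℕ} (hi : i ≤ n) :
    dPartial i μ ≤ dPartial i ν := by
  obtain ⟨-, e, he, hxe⟩ := hμ
  let lab (s : Fin n) : Bool := (s : ℕ) < i
  let m (s : Fin n) : ℤ := if (s : ℕ) < i then -μ s else 0
  have hdet := linearIndependent_iff_det_ne_zero.1 he.1
  have hespan (s) : e s ∈ span F⟦X⟧ (Set.range e) := subset_span ⟨s, rfl⟩
  have key := order_det_sub_totalDist_le (lab := lab) (P := e)
    (v := fun s => (tpow (m s) : F⸨X⸩) • e s) (ν := fun a => cond a ν 0)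
    (g := fun a => cond a g e) (Bool.rec antitone_const hν)
    (by
      rintro (_ | _) s
      · simpa only [cond_false, Pi.zero_apply, tpow_zero, one_smul] using hespan s
      · exact he.2 ▸ hgp s)
    (fun s => by
      by_cases hs : (s : ℕ) < i
      · simpa only [lab, m, hs, decide_true, cond_true, if_true, ← hg.2] using hxe.mem s
      · simpa only [lab, m, hs, decide_false, cond_false, if_false, tpow_zero, one_smul]
          using hespan s)
    (linearIndependent_iff_det_ne_zero.1 (linearIndependent_tpow_smul m he.1))
  have hm : ∑ s, m s = -dPartial i μ := by
    rw [dPartial, ← sum_filter, sum_neg_distrib]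
  have htotal : totalDist lab (fun a => cond a ν 0) = dPartial i ν := by
    simp [totalDist, lab, dPartial, Fin.card_filter_val_lt, hi]
  rw [order_det_tpow_smul m hdet, hm, htotal] at key
  linarith

variable {P : Fin n → Fin n → F⸨X⸩} {S : Submodule F (Fin n → F)}

open scoped Classical in
/-- Exponents `ν'` such that `t ^ ν' s • g s ∈ p'` whenever `g s ∈ x` and `t ^ ν s • g s ∈ p`, where
`P` is a basis of `p` and `p'` is the preimage of `S` in `p`. -/
noncomputable def residueShift (P : Fin n → Fin n → F⸨X⸩) (S : Submodule F (Fin n → F))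
    (x : Submodule F⟦X⟧ (Fin n → F⸨X⸩)) (ν : Fin n → ℤ) (s : Fin n) : ℤ :=
  if residueFiltration P x (ν s) ≤ S then ν s else ν s + 1

theorem residueShift_antitone (x : Submodule F⟦X⟧ (Fin n → F⸨X⸩)) {ν : Fin n → ℤ}
    (hν : Antitone ν) : Antitone (residueShift P S x ν) := by
  intro s s' hss
  have hle := hν hss
  rcases hle.eq_or_lt with heq | hlt
  · rw [residueShift, residueShift, heq]
  · unfold residueShift
    split_ifs with h' h
    exacts [hle, hle.trans (Int.le_add_one le_rfl), hlt, Int.add_le_add_right hle 1]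

theorem tpow_residueShift_smul_mem {P' : Fin n → Fin n → F⸨X⸩}
    (hP' : ∀ c : Fin n → F⟦X⟧, (fun r => constantCoeff (c r)) ∈ S →
      Fintype.linearCombination F⟦X⟧ P c ∈ span F⟦X⟧ (Set.range P'))
    {x : Submodule F⟦X⟧ (Fin n → F⸨X⸩)} {ν : Fin n → ℤ} {s : Fin n} {w : Fin n → F⸨X⸩}
    (hwx : w ∈ x) (hw : (tpow (ν s) : F⸨X⸩) • w ∈ span F⟦X⟧ (Set.range P)) :
    (tpow (residueShift P S x ν s) : F⸨X⸩) • w ∈ span F⟦X⟧ (Set.range P') := by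
  obtain ⟨d, hd⟩ := mem_span_range_iff_exists_linearCombination.1 hw
  unfold residueShift
  split_ifs with h
  · rw [← hd]
    refine hP' d (h ⟨d, rfl, ?_⟩)
    rwa [hd, tpow_smul_tpow_smul, neg_add_cancel, tpow_zero, one_smul]
  · have hX : (tpow (ν s + 1) : F⸨X⸩) • w =
        Fintype.linearCombination F⟦X⟧ P ((X : F⟦X⟧) • d) := by
      rw [map_smul, hd, add_comm, ← tpow_smul_tpow_smul]
      simpa only [Nat.cast_one, pow_one] using
        tpow_natCast_smul (F := F) 1 ((tpow (ν s) : F⸨X⸩) • w)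
    rw [hX]
    refine hP' _ ?_
    simp only [Pi.smul_apply, smul_eq_mul, map_mul, constantCoeff_X, zero_mul]
    exact S.zero_mem

variable {ι : Type*} [Fintype ι] [DecidableEq ι] {lab : Fin n → ι}
  {x : ι → Submodule F⟦X⟧ (Fin n → F⸨X⸩)}

theorem totalDist_residueShift_le {pos : Fin n → Fin n}
    (hpos : ∀ ν : ι → Fin n → ℤ, ∑ s, ν (lab s) (pos s) = totalDist lab ν) (ν : ι → Fin n → ℤ)
    {I : Finset (Fin n)}
    (hI : ∀ s ∈ I, residueFiltration P (x (lab s)) (ν (lab s) (pos s)) ≤ S) :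
    totalDist lab (fun a => residueShift P S (x a) (ν a)) ≤ totalDist lab ν + (n - #I) := by
  rw [← hpos, ← hpos, ← sum_ite_mem_zero_one]
  calc ∑ s, residueShift P S (x (lab s)) (ν (lab s)) (pos s)
      ≤ ∑ s, (ν (lab s) (pos s) + if s ∈ I then 0 else 1) := sum_le_sum fun s _ => by
        by_cases hs : s ∈ I
        · simp only [residueShift, if_pos (hI s hs), hs, if_true, add_zero, le_refl]
        · simp only [residueShift, hs, if_false]
          split_ifs <;> omega
    _ = ∑ s, ν (lab s) (pos s) + ∑ s, if s ∈ I then 0 else 1 := sum_add_distrib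

theorem exists_totalDist_lt {p : Submodule F⟦X⟧ (Fin n → F⸨X⸩)} {μ : ι → Fin n → ℤ}
    (hP : IsLatticeBasis p P) (hμ : ∀ a, IsDist p (x a) (μ a)) {pos : Fin n → Fin n}
    (hpos : ∀ ν : ι → Fin n → ℤ, ∑ s, ν (lab s) (pos s) = totalDist lab ν)
    (hR : ¬ RadoCondition fun s => residueFiltration P (x (lab s)) (μ (lab s) (pos s))) :
    ∃ p' D' μ', HasValDet p' D' ∧ (∀ a, IsDist p' (x a) (μ' a)) ∧
      totalDist lab μ' - D' < totalDist lab μ - (Matrix.of P).det.order := by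
  simp only [RadoCondition, not_forall, not_le] at hR
  obtain ⟨I, hI⟩ := hR
  set S := I.sup fun s => residueFiltration P (x (lab s)) (μ (lab s) (pos s))
  obtain ⟨P', hP'det, hP'order, hP'⟩ :=
    exists_basis_residue_preimage (linearIndependent_iff_det_ne_zero.1 hP.1) S
  have hbasis : IsLatticeBasis (span F⟦X⟧ (Set.range P')) P' :=
    ⟨linearIndependent_iff_det_ne_zero.2 hP'det, rfl⟩
  choose hanti e he hxe using hμ
  choose μ' hμ' using fun a => exists_isDist ⟨P', hbasis⟩ ⟨_, hxe a⟩
  have hmem (a s) : (tpow (residueShift P S (x a) (μ a) s) : F⸨X⸩) •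
      ((tpow (-(μ a s)) : F⸨X⸩) • e a s) ∈ span F⟦X⟧ (Set.range P') :=
    tpow_residueShift_smul_mem hP' ((hxe a).mem s) <| by
      rw [tpow_smul_tpow_smul, add_neg_cancel, tpow_zero, one_smul, ← hP.2]
      exact (he a).mem s
  have hle : totalDist lab μ' ≤ totalDist lab fun a => residueShift P S (x a) (μ a) :=
    sum_le_sum fun a _ => (hμ' a).dPartial_le (hxe a) (residueShift_antitone (x a) (hanti a))
      (hmem a) (card_finset_fin_le _)
  have hshift := totalDist_residueShift_le (x := x) (S := S) hpos μ
    (fun s hs => le_sup (f := fun s => residueFiltration P (x (lab s)) (μ (lab s) (pos s))) hs)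
  refine ⟨_, _, μ', ⟨P', hbasis, rfl⟩, hμ', ?_⟩
  omega

theorem exists_order_det_eq_or_exists_totalDist_lt {p : Submodule F⟦X⟧ (Fin n → F⸨X⸩)} {D : ℤ}
    {μ : ι → Fin n → ℤ} (hp : HasValDet p D) (hμ : ∀ a, IsDist p (x a) (μ a)) :
    (∃ v : Fin n → Fin n → F⸨X⸩, (∀ s, v s ∈ x (lab s)) ∧ (Matrix.of v).det ≠ 0 ∧
      totalDist lab μ - D = -(Matrix.of v).det.order) ∨
    ∃ p' D' μ', HasValDet p' D' ∧ (∀ a, IsDist p' (x a) (μ' a)) ∧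
      totalDist lab μ' - D' < totalDist lab μ - D := by
  obtain ⟨P, hP, rfl⟩ := hp
  obtain ⟨pos, hpos⟩ := exists_forall_sum_eq_totalDist lab
  by_cases hR : RadoCondition fun s => residueFiltration P (x (lab s)) (μ (lab s) (pos s))
  · obtain ⟨w, hw, hli⟩ := hR.exists_linearIndependent
    obtain ⟨v, hv, hdet, horder⟩ := exists_order_det_eq_of_linearIndependent
      (linearIndependent_iff_det_ne_zero.1 hP.1) hw hli
    refine Or.inl ⟨v, hv, hdet, ?_⟩
    rw [horder, hpos, neg_sub]
  · exact Or.inr (exists_totalDist_lt hP hμ hpos hR)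

/-- The values `∑ₐ d_{cₐ}(p, xₐ) - val (det p)` for all lattices `p`, where `cₐ` is the number of
indices `s` with `lab s = a`. -/
def distValues (lab : Fin n → ι) (x : ι → Submodule F⟦X⟧ (Fin n → F⸨X⸩)) : Set ℤ :=
  {z | ∃ p D μ, HasValDet p D ∧ (∀ a, IsDist p (x a) (μ a)) ∧ z = totalDist lab μ - D}

theorem isLeast_distValues (hx : ∀ a, IsFullLattice (x a)) {m : ℤ}
    (hm : IsGreatest {z : ℤ | ∃ v : Fin n → Fin n → F⸨X⸩, (∀ s, v s ∈ x (lab s)) ∧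
      (Matrix.of v).det ≠ 0 ∧ z = -(Matrix.of v).det.order} m) :
    IsLeast (distValues lab x) m := by
  obtain ⟨⟨v, hv, hdet, rfl⟩, hmax⟩ := hm
  have hlower : -(Matrix.of v).det.order ∈ lowerBounds (distValues lab x) := by
    rintro _ ⟨p, D, μ, hp, hμ, rfl⟩
    exact neg_order_det_le_totalDist hp hμ hv hdet
  have hne : (distValues lab x).Nonempty := by
    have hbasis : IsLatticeBasis _ (Pi.basisFun F⸨X⸩ (Fin n)) :=
      ⟨(Pi.basisFun F⸨X⸩ (Fin n)).linearIndependent, rfl⟩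
    choose μ hμ using fun a => exists_isDist ⟨_, hbasis⟩ (hx a)
    exact ⟨_, _, _, μ, ⟨_, hbasis, rfl⟩, hμ, rfl⟩
  obtain ⟨z, hz, hleast⟩ : ∃ z, IsLeast (distValues lab x) z :=
    ⟨_, Int.csInf_mem hne ⟨_, hlower⟩, fun _ => csInf_le ⟨_, hlower⟩⟩
  suffices z ≤ -(Matrix.of v).det.order from (this.antisymm (hlower hz)) ▸ ⟨hz, hleast⟩
  obtain ⟨p, D, μ, hp, hμ, rfl⟩ := hz
  rcases exists_order_det_eq_or_exists_totalDist_lt (lab := lab) hp hμ with h | h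
  · exact hmax h
  · obtain ⟨p', D', μ', hp', hμ', hlt⟩ := h
    exact absurd (hleast ⟨p', D', μ', hp', hμ', rfl⟩) hlt.not_ge

end Descent

section Normalization

open scoped PowerSeries LaurentSeries
open Finset

variable {F : Type*} [Field F] {n : ℕ}

theorem IsDist.sum_eq {p x : Submodule F⟦X⟧ (Fin n → F⸨X⸩)} {μ : Fin n → ℤ} (hμ : IsDist p x μ)
    {D d : ℤ} (hp : HasValDet p D) (hx : HasValDet x d) : ∑ s, μ s = D - d := by
  obtain ⟨-, e, he, hxe⟩ := hμ
  rw [← hp.order_det_eq he, ← hx.order_det_eq hxe, order_det_tpow_smul (fun s => -μ s)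
    (linearIndependent_iff_det_ne_zero.1 he.1), sum_neg_distrib]
  ring

theorem HasValDet.natCast_div_mul {p : Submodule F⟦X⟧ (Fin n → F⸨X⸩)} {D : ℤ}
    (hp : HasValDet p D) : (n / n : ℚ) * D = D := by
  rcases eq_or_ne n 0 with rfl | hn
  · obtain ⟨P, -, rfl⟩ := hp
    rw [Matrix.det_fin_zero, HahnSeries.order_one, Int.cast_zero, mul_zero]
  · rw [div_self (Nat.cast_ne_zero.2 hn), one_mul]

variable {ι : Type*} [Fintype ι] [DecidableEq ι] (lab : Fin n → ι)
  {x : ι → Submodule F⟦X⟧ (Fin n → F⸨X⸩)} {d : ι → ℤ}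

theorem sum_dNorm_eq (hx : ∀ a, HasValDet (x a) (d a)) {p : Submodule F⟦X⟧ (Fin n → F⸨X⸩)} {D : ℤ}
    (hp : HasValDet p D) {μ : ι → Fin n → ℤ} (hμ : ∀ a, IsDist p (x a) (μ a)) :
    ∑ a, dNorm #{s | lab s = a} (μ a) =
      (totalDist lab μ - D : ℤ) + (∑ a, (#{s | lab s = a} : ℚ) * d a) / n := by
  have hcard : ∑ a, (#{s | lab s = a} : ℚ) = n := by
    rw [← Nat.cast_sum, ← card_eq_sum_card_fiberwise fun s _ => mem_coe.2 (mem_univ (lab s)),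
      card_univ, Fintype.card_fin]
  calc ∑ a, dNorm #{s | lab s = a} (μ a)
      = ∑ a, ((dPartial #{s | lab s = a} (μ a) : ℚ) - #{s | lab s = a} * (D / n)
          + #{s | lab s = a} * d a / n) := by
        refine sum_congr rfl fun a _ => ?_
        rw [dNorm, (hμ a).sum_eq hp (hx a), Int.cast_sub]
        ring
    _ = totalDist lab μ - (n / n : ℚ) * D + (∑ a, (#{s | lab s = a} : ℚ) * d a) / n := by
        rw [sum_add_distrib, sum_sub_distrib, ← sum_mul, hcard, ← sum_div, totalDist, Int.cast_sum]
        ring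
    _ = (totalDist lab μ - D : ℤ) + (∑ a, (#{s | lab s = a} : ℚ) * d a) / n := by
        rw [hp.natCast_div_mul, Int.cast_sub]

theorem isLeast_sum_dNorm (hx : ∀ a, HasValDet (x a) (d a)) {m : ℤ}
    (hm : IsGreatest {z : ℤ | ∃ v : Fin n → Fin n → F⸨X⸩, (∀ s, v s ∈ x (lab s)) ∧
      (Matrix.of v).det ≠ 0 ∧ z = -(Matrix.of v).det.order} m) :
    IsLeast {q : ℚ | ∃ (p : Submodule F⟦X⟧ (Fin n → F⸨X⸩)) (μ : ι → Fin n → ℤ), IsFullLattice p ∧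
        (∀ a, IsDist p (x a) (μ a)) ∧ q = ∑ a, dNorm #{s | lab s = a} (μ a)}
      (m + (∑ a, (#{s | lab s = a} : ℚ) * d a) / n) := by
  have hfull (a) : IsFullLattice (x a) := (hx a).imp fun _ h => h.1
  obtain ⟨⟨p, D, μ, hp, hμ, rfl⟩, hleast⟩ := isLeast_distValues hfull hm
  refine ⟨⟨p, μ, hp.imp fun _ h => h.1, hμ, (sum_dNorm_eq lab hx hp hμ).symm⟩, ?_⟩
  rintro _ ⟨p', μ', ⟨P', hP'⟩, hμ', rfl⟩
  have hp' : HasValDet p' _ := ⟨P', hP', rfl⟩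
  rw [sum_dNorm_eq lab hx hp' hμ']
  exact add_le_add_left (Int.cast_le.2 (hleast ⟨p', _, μ', hp', hμ', rfl⟩)) _

end Normalization

section TripleInvariant

open scoped PowerSeries LaurentSeries
open Finset

variable {n i j k : ℕ}

/-- The labelling of `Fin n` by three consecutive blocks of lengths `i`, `j` and `n - i - j`. -/
def blockLabel (n i j : ℕ) (s : Fin n) : Fin 3 :=
  if (s : ℕ) < i then 0 else if (s : ℕ) < i + j then 1 else 2

theorem card_blockLabel_eq (hijk : i + j + k = n) (a : Fin 3) :
    #{s | blockLabel n i j s = a} = ![i, j, k] a := by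
  have hlt {m : ℕ} (hm : m ≤ n) : #{s : Fin n | (s : ℕ) < m} = m := by
    rw [Fin.card_filter_val_lt, min_eq_right hm]
  have hi := hlt (m := i) (by omega)
  have hij := hlt (m := i + j) (by omega)
  fin_cases a
  · have h0 (s : Fin n) : blockLabel n i j s = 0 ↔ (s : ℕ) < i := by grind [blockLabel]
    simpa [h0] using hi
  · have h1 (s : Fin n) : blockLabel n i j s = 1 ↔ (s : ℕ) < i + j ∧ ¬(s : ℕ) < i := by
      grind [blockLabel]
    have hsub : ({s | (s : ℕ) < i} : Finset (Fin n)) ⊆ ({s | (s : ℕ) < i + j} : Finset (Fin n)) :=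
      monotone_filter_right _ fun s _ h => Nat.lt_add_right j h
    have hcard := card_sdiff_of_subset hsub
    rw [← filter_and_not, hi, hij, Nat.add_sub_cancel_left] at hcard
    simpa [h1] using hcard
  · have h2 (s : Fin n) : blockLabel n i j s = 2 ↔ ¬(s : ℕ) < i + j := by grind [blockLabel]
    have hcard := card_compl ({s | (s : ℕ) < i + j} : Finset (Fin n))
    rw [compl_filter, hij, Fintype.card_fin, Nat.sub_eq_of_eq_add' hijk.symm] at hcard
    simpa [h2] using hcard

theorem ft_eq_min_dist_general {F : Type*} [Field F] (hijk : i + j + k = n)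
    (x₁ x₂ x₃ : Submodule F⟦X⟧ (Fin n → F⸨X⸩)) {d₁ d₂ d₃ : ℤ}
    (h₁ : HasValDet x₁ d₁) (h₂ : HasValDet x₂ d₂) (h₃ : HasValDet x₃ d₃) (Ft : ℤ)
    (hFt : IsGreatest {z : ℤ | ∃ v : Fin n → Fin n → F⸨X⸩,
        (∀ s : Fin n,
          v s ∈ (if (s : ℕ) < i then x₁ else if (s : ℕ) < i + j then x₂ else x₃)) ∧
        (Matrix.of v).det ≠ 0 ∧ z = -(Matrix.of v).det.order} Ft) :
    IsLeast {q : ℚ | ∃ (p : Submodule F⟦X⟧ (Fin n → F⸨X⸩)) (μ₁ μ₂ μ₃ : Fin n → ℤ),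
        IsFullLattice p ∧ IsDist p x₁ μ₁ ∧ IsDist p x₂ μ₂ ∧ IsDist p x₃ μ₃ ∧
        q = dNorm i μ₁ + dNorm j μ₂ + dNorm k μ₃}
      (Ft + (i * d₁ + j * d₂ + k * d₃) / n) := by
  have hx (a) : HasValDet (![x₁, x₂, x₃] a) (![d₁, d₂, d₃] a) := by
    fin_cases a
    exacts [h₁, h₂, h₃]
  have hlab (s : Fin n) : ![x₁, x₂, x₃] (blockLabel n i j s) =
      if (s : ℕ) < i then x₁ else if (s : ℕ) < i + j then x₂ else x₃ := by
    rw [blockLabel, apply_ite ![x₁, x₂, x₃], apply_ite ![x₁, x₂, x₃]]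
    rfl
  have key := isLeast_sum_dNorm (blockLabel n i j) hx (by simpa only [hlab] using hFt)
  simp only [card_blockLabel_eq hijk, Fin.sum_univ_three] at key
  refine ⟨?_, ?_⟩
  · obtain ⟨p, μ, hp, hμ, hq⟩ := key.1
    exact ⟨p, μ 0, μ 1, μ 2, hp, hμ 0, hμ 1, hμ 2, hq⟩
  · rintro _ ⟨p, μ₁, μ₂, μ₃, hp, hμ₁, hμ₂, hμ₃, rfl⟩
    refine key.2 ⟨p, ![μ₁, μ₂, μ₃], hp, fun a => ?_, rfl⟩
    fin_cases a
    exacts [hμ₁, hμ₂, hμ₃]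

end TripleInvariant

/-- **Metric interpretation of the tropical invariants.** Let `x₁, x₂, x₃` be points of
the affine Grassmannian for `SL_n` over `ℝ((t))` (lattices with `val (det) = 0`) and
`i + j + k = n`.  Then `fᵗ_{ijk}(x₁,x₂,x₃)`, the maximum of
`-val (det (u₁,...,uᵢ,v₁,...,vⱼ,w₁,...,w_k))` over `u`'s in `x₁`, `v`'s in `x₂`, `w`'s in
`x₃`, equals `min_p (d_i(p,x₁) + d_j(p,x₂) + d_k(p,x₃))`, the minimum over all points `p`
of the affine Grassmannian of `PGL_n` (lattices, with `d_a` normalized to be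
scaling-invariant, so that it only depends on the class of `p` up to scale). -/
theorem ft_eq_min_dist {n i j k : ℕ} (hijk : i + j + k = n)
    (x₁ x₂ x₃ : Submodule (PowerSeries ℝ) (Fin n → LaurentSeries ℝ))
    (h₁ : HasValDet x₁ 0) (h₂ : HasValDet x₂ 0) (h₃ : HasValDet x₃ 0)
    (Ft : ℤ)
    (hFt : IsGreatest {z : ℤ | ∃ v : Fin n → Fin n → LaurentSeries ℝ,
        (∀ s : Fin n,
          v s ∈ (if (s : ℕ) < i then x₁ else if (s : ℕ) < i + j then x₂ else x₃)) ∧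
        (Matrix.of v).det ≠ 0 ∧ z = -(Matrix.of v).det.order} Ft) :
    IsLeast {q : ℚ | ∃ (p : Submodule (PowerSeries ℝ) (Fin n → LaurentSeries ℝ))
        (μ₁ μ₂ μ₃ : Fin n → ℤ), IsFullLattice p ∧
        IsDist p x₁ μ₁ ∧ IsDist p x₂ μ₂ ∧ IsDist p x₃ μ₃ ∧
        q = dNorm i μ₁ + dNorm j μ₂ + dNorm k μ₃} (Ft : ℚ) := by
  simpa using ft_eq_min_dist_general hijk x₁ x₂ x₃ h₁ h₂ h₃ Ft hFt
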